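/- Let L = ℤp₁ + ℤp₂ with p₁, p₂ linearly independent over ℝ, and let σ be the Weierstrass sigma-function of L. For every ξ₀ ∈ ℂ and j ∈ {1,2}, the function z ↦ (σ(z)/σ(z−ξ₀)) · (σ(z−ξ₀+p_j)/σ(z+p_j)) is constant, equal to e^{v_j} where v_j = −3ξ₀/p_j + ξ₀ p_j² ∑_{λ ∈ L \ {0,−p_j}} 1/(λ(λ+p_j)²). -/

import Mathlib

open Complex Filter

noncomputable section

/-- The lattice generated by `p₁, p₂`. -/
def lat (p₁ p₂ : ℂ) : Set ℂ := {z | ∃ m n : ℤ, z = (m : ℂ) * p₁ + (n : ℂ) * p₂}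

/-- The Weierstrass sigma-function of the lattice generated by `p₁, p₂`. -/
def wsigma (p₁ p₂ : ℂ) (z : ℂ) : ℂ :=
  z * ∏' l : {l : ℂ // l ∈ lat p₁ p₂ ∧ l ≠ 0},
      Complex.exp (z / (l : ℂ) + z ^ 2 / (2 * (l : ℂ) ^ 2)) * (1 - z / (l : ℂ))

/-- The constant `v_j` associated to `ξ₀` and a period `pj`. -/
def vconst (p₁ p₂ ξ₀ pj : ℂ) : ℂ :=
  -3 * ξ₀ / pj + ξ₀ * pj ^ 2 *
    ∑' l : {l : ℂ // l ∈ lat p₁ p₂ ∧ l ≠ 0 ∧ l ≠ -pj},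
      1 / ((l : ℂ) * ((l : ℂ) + pj) ^ 2)

/-- The (half-open) fundamental parallelogram spanned by `p₁, p₂`. -/
def fpar (p₁ p₂ : ℂ) : Set ℂ :=
  {z | ∃ s t : ℝ, 0 ≤ s ∧ s < 1 ∧ 0 ≤ t ∧ t < 1 ∧ z = (s : ℂ) * p₁ + (t : ℂ) * p₂}

/-!
Take the leading `z` of `σ(z)` as the factor of `l = 0` in the product, and in `σ(z + p)` replace
`l` by `l + p`. Up to constants, the linear factors of `σ(z) σ(w + p)` become
`(l - z) ((l + p) - (w + p)) = (l - z) (l - w)`, which is symmetric in `z` and `w`; hence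
`σ(z) σ(w + p)` and `σ(w) σ(z + p)` differ only by the exponential of a sum over the lattice. In
this sum `l = 0` and `l = -p` together contribute `-3 (z - w) / p`. The other terms contribute
`(z - w) p ^ 2 / (l (l + p) ^ 2)` and a multiple of `1 / (l (l + p) ^ 2) + 1 / (l ^ 2 (l + p))`,
which is odd under the reflection `l ↦ -p - l` and so sums to zero.
-/

@[to_additive]
lemma tprod_subtype_and_eq_of_eq_one {α β : Type*} [CommMonoid α] [TopologicalSpace α]
    {P Q : β → Prop} {f : β → α} (hf : ∀ x, P x → ¬ Q x → f x = 1) :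
    ∏' x : {x // P x ∧ Q x}, f x = ∏' x : {x // P x}, f x := by
  have htprod := tprod_subtype {x | P x} f
  have htprod_and := tprod_subtype {x | P x ∧ Q x} f
  have : {x | P x ∧ Q x}.mulIndicator f = {x | P x}.mulIndicator f := by
    classical
    ext x
    by_cases hP : P x <;> by_cases hQ : Q x <;> simp [hP, hQ, hf]
  rw [this] at htprod_and
  exact htprod_and.trans htprod.symm

/-- The Weierstrass elementary factor `(1 - u) exp (u + u ^ 2 / 2 + ⋯ + u ^ n / n)` of genus `n`;
the exponent is written with the Taylor polynomial of the logarithm, to which it is compared. -/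
def weierstrassFactor (n : ℕ) (u : ℂ) : ℂ := (1 - u) * exp (-logTaylor (n + 1) (-u))

lemma weierstrassFactor_zero_right (n : ℕ) : weierstrassFactor n 0 = 1 := by
  simp [weierstrassFactor, logTaylor_at_zero]

lemma weierstrassFactor_two (u : ℂ) :
    weierstrassFactor 2 u = (1 - u) * exp (u + u ^ 2 / 2) := by
  have : -logTaylor (2 + 1) (-u) = u + u ^ 2 / 2 := by
    simp [logTaylor, Finset.sum_range_succ]
    ring
  rw [weierstrassFactor, this]

lemma weierstrassFactor_eq_exp {u : ℂ} (n : ℕ) (hu : u ≠ 1) :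
    weierstrassFactor n u = exp (log (1 + -u) - logTaylor (n + 1) (-u)) := by
  have h : 1 + -u ≠ 0 := by simpa [← sub_eq_add_neg, sub_eq_zero] using hu.symm
  rw [weierstrassFactor, sub_eq_add_neg (log _), exp_add, exp_log h, sub_eq_add_neg]

lemma norm_weierstrassFactor_sub_one_le (n : ℕ) {u : ℂ} (hu : ‖u‖ ≤ 1 / 2) :
    ‖weierstrassFactor n u - 1‖ ≤ 4 * ‖u‖ ^ (n + 1) := by
  have hu1 : u ≠ 1 := by
    rintro rfl
    norm_num at hu
  have hlog : ‖log (1 + -u) - logTaylor (n + 1) (-u)‖ ≤ 2 * ‖u‖ ^ (n + 1) := by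
    have hinv : (1 - ‖u‖)⁻¹ ≤ 2 := inv_le_of_inv_le₀ two_pos (by linarith)
    calc ‖log (1 + -u) - logTaylor (n + 1) (-u)‖
        ≤ ‖u‖ ^ (n + 1) * (1 - ‖u‖)⁻¹ / (n + 1) := by
          simpa using norm_log_sub_logTaylor_le n (z := -u) (by rw [norm_neg]; linarith)
      _ ≤ ‖u‖ ^ (n + 1) * (1 - ‖u‖)⁻¹ :=
          div_le_self (mul_nonneg (by positivity) (inv_nonneg.mpr (by linarith))) (by simp)
      _ ≤ 2 * ‖u‖ ^ (n + 1) := by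
          rw [mul_comm]
          gcongr
  have hpow : 2 * ‖u‖ ^ (n + 1) ≤ 1 := by
    have : ‖u‖ ^ (n + 1) ≤ ‖u‖ := pow_le_of_le_one (norm_nonneg u) (by linarith) n.succ_ne_zero
    linarith
  rw [weierstrassFactor_eq_exp n hu1]
  linarith [norm_exp_sub_one_le (hlog.trans hpow)]

lemma multipliable_weierstrassFactor {ι : Type*} {u : ι → ℂ} (n : ℕ)
    (hu : Summable fun i ↦ ‖u i‖ ^ (n + 1)) :
    Multipliable fun i ↦ weierstrassFactor n (u i) := by
  have hsmall : ∀ᶠ i in cofinite, ‖u i‖ ≤ 1 / 2 := by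
    have := hu.tendsto_cofinite_zero.eventually_le_const
      (show (0 : ℝ) < (1 / 2) ^ (n + 1) by positivity)
    filter_upwards [this] with i hi
    exact le_of_pow_le_pow_left₀ n.succ_ne_zero (by norm_num) hi
  have hsum : Summable fun i ↦ ‖weierstrassFactor n (u i) - 1‖ := by
    refine Summable.of_norm_bounded_eventually (hu.mul_left 4) ?_
    filter_upwards [hsmall] with i hi
    simpa using norm_weierstrassFactor_sub_one_le n hi
  simpa using multipliable_one_add_of_summable hsum

lemma finrank_int_le_finrank_real {E : Type*} [NormedAddCommGroup E] [NormedSpace ℝ E]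
    [FiniteDimensional ℝ E] (Λ : Submodule ℤ E) [hΛ : DiscreteTopology Λ] :
    Module.finrank ℤ Λ ≤ Module.finrank ℝ E := by
  have hspan : Submodule.span ℤ (Λ : Set E) = Λ := Submodule.span_eq Λ
  calc Module.finrank ℤ Λ = Set.finrank ℤ (Λ : Set E) := by rw [Set.finrank, hspan]
    _ = Set.finrank ℝ (Λ : Set E) :=
      (Real.finrank_eq_int_finrank_of_discrete (by rwa [hspan])).symm
    _ ≤ Module.finrank ℝ E := Submodule.finrank_le _

/-- The Weierstrass sigma-function of a discrete subgroup `Λ` of `ℂ`. The product runs over all of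
`Λ`: since `z / 0 = 0`, the factor of `l = 0` is `1`. -/
def weierstrassSigma (Λ : Submodule ℤ ℂ) (z : ℂ) : ℂ :=
  z * ∏' l : Λ, weierstrassFactor 2 (z / l)

/-- The exponent `v` in the quotient formula for `weierstrassSigma`, attached to a shift `ξ` and a
period `p`. Since `1 / 0 = 0`, the terms of `l = 0` and `l = -p` in the sum vanish. -/
def sigmaQuotientExponent (Λ : Submodule ℤ ℂ) (ξ p : ℂ) : ℂ :=
  -3 * ξ / p + ξ * p ^ 2 * ∑' l : Λ, 1 / ((l : ℂ) * (l + p) ^ 2)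

/-- The factor of `weierstrassSigma Λ z` attached to `l`, where the leading `z` is taken to be the
factor of `l = 0`. -/
def sigmaFactor (z l : ℂ) : ℂ := (if l = 0 then z else 1) * weierstrassFactor 2 (z / l)

/-- The exponent in the exponential part of `sigmaFactor z l`. -/
def sigmaFactorExponent (z l : ℂ) : ℂ := z / l + (z / l) ^ 2 / 2

/-- The logarithm of the ratio of the `l`-th factors of `σ(z) σ(w + p)` and `σ(w) σ(z + p)`, where
in the sigma-functions of the translates by `p` the product is reindexed by `l ↦ l + p`. -/
def sigmaExponentDefect (z w p l : ℂ) : ℂ :=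
  sigmaFactorExponent z l + sigmaFactorExponent (w + p) (l + p) -
    (sigmaFactorExponent w l + sigmaFactorExponent (z + p) (l + p))

lemma sigmaFactor_eq (z l : ℂ) :
    sigmaFactor z l =
      (if l = 0 then -1 else l⁻¹) * (l - z) * exp (sigmaFactorExponent z l) := by
  rw [sigmaFactor, sigmaFactorExponent, weierstrassFactor_two]
  split_ifs with hl
  · simp [hl]
  · field_simp

lemma sigmaFactor_mul_sigmaFactor_add (z w p l : ℂ) :
    sigmaFactor z l * sigmaFactor (w + p) (l + p) =
      sigmaFactor w l * sigmaFactor (z + p) (l + p) * exp (sigmaExponentDefect z w p l) := by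
  simp only [sigmaFactor_eq, sigmaExponentDefect, exp_sub, exp_add, add_sub_add_right_eq_sub]
  field_simp

lemma sigmaExponentDefect_of_ne {p l : ℂ} (z w : ℂ) (hl : l ≠ 0) (hlp : l + p ≠ 0) :
    sigmaExponentDefect z w p l = (z - w) * p ^ 2 * (1 / (l * (l + p) ^ 2)) +
      (z - w) * (z + w) * p / 2 * (1 / (l * (l + p) ^ 2) + 1 / (l ^ 2 * (l + p))) := by
  simp only [sigmaExponentDefect, sigmaFactorExponent]
  field_simp
  ring

lemma sigmaExponentDefect_zero_add_neg {p : ℂ} (z w : ℂ) (hp : p ≠ 0) :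
    sigmaExponentDefect z w p 0 + sigmaExponentDefect z w p (-p) = -3 * (z - w) / p := by
  simp only [sigmaExponentDefect, sigmaFactorExponent, div_zero, zero_add, neg_add_cancel]
  field_simp
  ring

section DiscreteSubgroup

variable (Λ : Submodule ℤ ℂ) [DiscreteTopology Λ]

lemma summable_norm_inv_pow_three : Summable fun l : Λ ↦ ‖(l : ℂ)‖⁻¹ ^ 3 := by
  have hrank := finrank_int_le_finrank_real Λ
  rw [finrank_real_complex] at hrank
  exact ZLattice.summable_norm_pow_inv Λ 3 (by omega)

lemma hasProd_sigmaFactor (z : ℂ) :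
    HasProd (fun l : Λ ↦ sigmaFactor z l) (weierstrassSigma Λ z) := by
  have hsum : Summable fun l : Λ ↦ ‖z / l‖ ^ 3 :=
    ((summable_norm_inv_pow_three Λ).mul_left (‖z‖ ^ 3)).congr fun l ↦ by
      rw [norm_div, div_eq_mul_inv, mul_pow]
  refine ((hasProd_ite_eq (0 : Λ) z).mul
    (multipliable_weierstrassFactor 2 hsum).hasProd).congr_fun fun l ↦ ?_
  simp [sigmaFactor]

lemma hasProd_sigmaFactor_add (z : ℂ) (p : Λ) :
    HasProd (fun l : Λ ↦ sigmaFactor z (l + p)) (weierstrassSigma Λ z) :=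
  ((Equiv.addRight p).hasProd_iff (f := fun l : Λ ↦ sigmaFactor z l)).mpr (hasProd_sigmaFactor Λ z)

lemma summable_one_div_mul_add_sq (p : Λ) :
    Summable fun l : Λ ↦ 1 / ((l : ℂ) * (l + p) ^ 2) := by
  have mul_sq_le {a b : ℝ} (ha : 0 ≤ a) (hb : 0 ≤ b) : a * b ^ 2 ≤ a ^ 3 + b ^ 3 := by
    nlinarith [mul_nonneg (add_nonneg ha hb) (sq_nonneg (a - b)), mul_nonneg (sq_nonneg a) hb]
  have hcube := summable_norm_inv_pow_three Λ
  have hcube_shift : Summable fun l : Λ ↦ ‖(l + p : ℂ)‖⁻¹ ^ 3 :=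
    ((Equiv.addRight p).summable_iff (f := fun l : Λ ↦ ‖(l : ℂ)‖⁻¹ ^ 3)).mpr hcube
  refine Summable.of_norm_bounded (hcube.add hcube_shift) fun l ↦ ?_
  simpa only [one_div, mul_inv, inv_pow, norm_mul, norm_inv, norm_pow] using
    mul_sq_le (inv_nonneg.mpr (norm_nonneg (l : ℂ))) (inv_nonneg.mpr (norm_nonneg (l + p : ℂ)))

lemma hasSum_one_div_mul_add_sq_add_one_div_sq_mul_add (p : Λ) :
    HasSum (fun l : Λ ↦ 1 / ((l : ℂ) * (l + p) ^ 2) + 1 / ((l : ℂ) ^ 2 * (l + p))) 0 := by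
  have hsum := (summable_one_div_mul_add_sq Λ p).hasSum
  have hrefl := ((Equiv.subLeft (-p)).hasSum_iff.mpr hsum).neg
  rw [← add_neg_cancel (∑' l : Λ, 1 / ((l : ℂ) * (l + p) ^ 2))]
  refine (hsum.add hrefl).congr_fun fun l ↦ ?_
  have : (-p - l : ℂ) * (-p - l + p) ^ 2 = -((l : ℂ) ^ 2 * (l + p)) := by ring
  simp only [Function.comp_apply, Equiv.subLeft_apply, Submodule.coe_sub, Submodule.coe_neg, this,
    div_neg, neg_neg]

lemma hasSum_sigmaExponentDefect {p : Λ} (hp : p ≠ 0) (z w : ℂ) :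
    HasSum (fun l : Λ ↦ sigmaExponentDefect z w p l) (sigmaQuotientExponent Λ (z - w) p) := by
  have hp' : (p : ℂ) ≠ 0 := by simpa using hp
  have hboundary := (hasSum_ite_eq (0 : Λ) (sigmaExponentDefect z w p 0)).add
    (hasSum_ite_eq (-p) (sigmaExponentDefect z w p (-p)))
  rw [sigmaExponentDefect_zero_add_neg z w hp'] at hboundary
  have hgeneric := ((summable_one_div_mul_add_sq Λ p).hasSum.mul_left ((z - w) * p ^ 2)).add
    ((hasSum_one_div_mul_add_sq_add_one_div_sq_mul_add Λ p).mul_left ((z - w) * (z + w) * p / 2))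
  rw [mul_zero, add_zero] at hgeneric
  refine (hboundary.add hgeneric).congr_fun fun l ↦ ?_
  rcases eq_or_ne l 0 with rfl | hl
  · simp [hp]
  rcases eq_or_ne l (-p) with rfl | hlp
  · simp [hp]
  · have hl' : (l : ℂ) ≠ 0 := by simpa using hl
    have hlp' : (l + p : ℂ) ≠ 0 := by simpa [eq_neg_iff_add_eq_zero, Subtype.ext_iff] using hlp
    simp [hl, hlp, sigmaExponentDefect_of_ne z w hl' hlp']

theorem weierstrassSigma_mul_weierstrassSigma_add {p : Λ} (hp : p ≠ 0) (z w : ℂ) :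
    weierstrassSigma Λ z * weierstrassSigma Λ (w + p) =
      weierstrassSigma Λ w * weierstrassSigma Λ (z + p) *
        exp (sigmaQuotientExponent Λ (z - w) p) := by
  have hleft := (hasProd_sigmaFactor Λ z).mul (hasProd_sigmaFactor_add Λ (w + p) p)
  have hright := ((hasProd_sigmaFactor Λ w).mul (hasProd_sigmaFactor_add Λ (z + p) p)).mul
    (hasSum_sigmaExponentDefect Λ hp z w).cexp
  exact hleft.unique (hright.congr_fun fun l ↦ sigmaFactor_mul_sigmaFactor_add z w p l)

theorem sigma_quotient_eq_exp_v_general {p : Λ} (hp : p ≠ 0) (ξ : ℂ) :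
    ∀ z : ℂ, weierstrassSigma Λ (z - ξ) ≠ 0 → weierstrassSigma Λ (z + p) ≠ 0 →
      weierstrassSigma Λ z / weierstrassSigma Λ (z - ξ) *
        (weierstrassSigma Λ (z - ξ + p) / weierstrassSigma Λ (z + p)) =
      exp (sigmaQuotientExponent Λ ξ p) := by
  intro z hξ hzp
  have h := weierstrassSigma_mul_weierstrassSigma_add Λ hp z (z - ξ)
  rw [sub_sub_cancel] at h
  rw [div_mul_div_comm, h, mul_div_cancel_left₀ _ (mul_ne_zero hξ hzp)]

end DiscreteSubgroup

lemma lat_eq_span (p₁ p₂ : ℂ) : lat p₁ p₂ = Submodule.span ℤ {p₁, p₂} := by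
  ext l
  simp [lat, Submodule.mem_span_pair, eq_comm]

lemma wsigma_eq_weierstrassSigma (p₁ p₂ z : ℂ) :
    wsigma p₁ p₂ z = weierstrassSigma (Submodule.span ℤ {p₁, p₂}) z := by
  have hfactor (l : ℂ) :
      exp (z / l + z ^ 2 / (2 * l ^ 2)) * (1 - z / l) = weierstrassFactor 2 (z / l) := by
    rw [weierstrassFactor_two, div_pow, div_div, mul_comm (l ^ 2), mul_comm]
  simp only [wsigma, hfactor]
  rw [weierstrassSigma, lat_eq_span,
    tprod_subtype_and_eq_of_eq_one (f := fun l ↦ weierstrassFactor 2 (z / l))]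
  · rfl
  · intro l _ hl
    simp [not_ne_iff.mp hl, weierstrassFactor_zero_right]

lemma vconst_eq_sigmaQuotientExponent (p₁ p₂ ξ p : ℂ) :
    vconst p₁ p₂ ξ p = sigmaQuotientExponent (Submodule.span ℤ {p₁, p₂}) ξ p := by
  rw [vconst, sigmaQuotientExponent, lat_eq_span,
    tsum_subtype_and_eq_of_eq_zero (f := fun l ↦ 1 / (l * (l + p) ^ 2))]
  · rfl
  · intro l _ hl
    rcases eq_or_ne l 0 with rfl | hl0
    · simp
    · have : l = -p := by simpa [hl0] using hl
      simp [this]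

lemma discreteTopology_span_pair {p₁ p₂ : ℂ} (hind : LinearIndependent ℝ ![p₁, p₂]) :
    DiscreteTopology (Submodule.span ℤ {p₁, p₂}) :=
  inferInstanceAs (DiscreteTopology (PeriodPair.mk p₁ p₂ hind).lattice)

/-- For every `ξ₀ ∈ ℂ` and `pj ∈ {p₁, p₂}`, the function
`z ↦ (σ(z)/σ(z−ξ₀)) · (σ(z−ξ₀+pj)/σ(z+pj))` is constantly equal to `e^{v_j}`,
wherever the denominators are nonzero. -/
theorem sigma_quotient_eq_exp_v (p₁ p₂ : ℂ)
    (hind : LinearIndependent ℝ ![p₁, p₂]) (ξ₀ : ℂ)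
    (pj : ℂ) (hpj : pj = p₁ ∨ pj = p₂) :
    ∀ z : ℂ, wsigma p₁ p₂ (z - ξ₀) ≠ 0 → wsigma p₁ p₂ (z + pj) ≠ 0 →
      (wsigma p₁ p₂ z / wsigma p₁ p₂ (z - ξ₀)) *
        (wsigma p₁ p₂ (z - ξ₀ + pj) / wsigma p₁ p₂ (z + pj)) =
      Complex.exp (vconst p₁ p₂ ξ₀ pj) := by
  have := discreteTopology_span_pair hind
  have hmem : pj ∈ Submodule.span ℤ {p₁, p₂} := Submodule.subset_span hpj
  have hne : pj ≠ 0 := by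
    rcases hpj with rfl | rfl
    exacts [hind.ne_zero 0, hind.ne_zero 1]
  simpa only [wsigma_eq_weierstrassSigma, vconst_eq_sigmaQuotientExponent] using
    sigma_quotient_eq_exp_v_general _ (p := ⟨pj, hmem⟩) (by simpa using hne) ξ₀
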